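/- Let C : ℤ → [0,∞) satisfy: (i) C is even and C(z) = 0 iff z = 0; (ii) C(z) ≤ C(w) whenever z ⪯ w; and suppose C coincides on ℕ with a concave function f : [0,∞) → ℝ (with f(0) = C(0) = 0). Then for every positive integer N there exists a monotone norm ∥·∥ on ℝ^N satisfying the compatibility equation for C. -/

import Mathlib

/-- `f` is a norm on the real vector space `E`. -/
def IsNorm {E : Type*} [AddCommGroup E] [Module ℝ E] (f : E → ℝ) : Prop :=
  (∀ x, 0 ≤ f x) ∧ (∀ x, f x = 0 ↔ x = 0) ∧
    (∀ x y, f (x + y) ≤ f x + f y) ∧ ∀ (c : ℝ) (x : E), f (c • x) = |c| * f x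

/-- The partial order `x ⪯ y` on real vectors. -/
def PreOrd {ι : Type*} (x y : ι → ℝ) : Prop :=
  ∀ j, |x j| ≤ |y j| ∧ 0 ≤ x j * y j

/-- The single-material (`m = 1`) compatibility equation between a cost `C : ℤ → ℝ`
and a norm `nrm` on `ℝ^N`. -/
def CompatEq1 (N : ℕ) (C : ℤ → ℝ) (nrm : (Fin N → ℝ) → ℝ) : Prop :=
  ∀ θ : ℤ, θ.natAbs ≤ N →
    ∀ K : Finset (Fin N), K.card = θ.natAbs →
      C θ = nrm fun j => (θ.sign : ℝ) * (if j ∈ K then 1 else 0)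

/-!
The norm is a Lorentz norm: the largest value of `∑ j, w (σ j) * |x j|` over all permutations `σ`,
where the weights `w i = C (i + 1) - C i` are the increments of the cost. As a maximum of weighted
`ℓ¹` seminorms it is automatically a monotone seminorm. Concavity makes the weights decrease, so by
the rearrangement inequality the maximum at the indicator of a `k`-element set is
`w 0 + ⋯ + w (k - 1)`, which telescopes to `C k`.
-/

open scoped NNReal

theorem IsNorm.of_seminorm {E : Type*} [AddCommGroup E] [Module ℝ E] (p : Seminorm ℝ E)
    (hp : ∀ x, p x = 0 → x = 0) : IsNorm p :=
  ⟨apply_nonneg p, fun x ↦ ⟨hp x, fun hx ↦ hx ▸ map_zero p⟩, map_add_le_add p,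
    map_smul_eq_mul p⟩

theorem CompatEq1.of_seminorm {N : ℕ} {C : ℤ → ℝ} (heven : ∀ z, C (-z) = C z)
    (p : Seminorm ℝ (Fin N → ℝ))
    (hp : ∀ K : Finset (Fin N), p (fun j ↦ if j ∈ K then 1 else 0) = C K.card) :
    CompatEq1 N C p := by
  intro θ _ K hK
  have hθK : C θ = C K.card := by
    rw [hK]
    rcases Int.natAbs_eq θ with h | h
    · rw [← h]
    · rw [← heven θ.natAbs, ← h]
  rw [hθK, ← hp K]
  rcases eq_or_ne θ 0 with rfl | hθ
  · obtain rfl : K = ∅ := Finset.card_eq_zero.1 hK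
    simp only [Finset.notMem_empty, if_false, mul_zero]
  · have hsign : ‖(θ.sign : ℝ)‖ = 1 := by
      rcases lt_or_gt_of_ne hθ with h | h
      · simp [Int.sign_eq_neg_one_of_neg h]
      · simp [Int.sign_eq_one_of_pos h]
    calc p (fun j ↦ if j ∈ K then 1 else 0)
        = ‖(θ.sign : ℝ)‖ * p (fun j ↦ if j ∈ K then 1 else 0) := by rw [hsign, one_mul]
      _ = p fun j ↦ (θ.sign : ℝ) * (if j ∈ K then 1 else 0) := (map_smul_eq_mul p _ _).symm

section Lorentz

variable {ι : Type*} [Fintype ι]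

/-- The weighted `ℓ¹` seminorm `∑ j, w j * |x j|` on `ι → ℝ`, the building block of the Lorentz
seminorm. -/
noncomputable def weightedL1Seminorm (w : ι → ℝ≥0) : Seminorm ℝ (ι → ℝ) :=
  ∑ j, w j • (normSeminorm ℝ ℝ).comp (LinearMap.proj j)

theorem weightedL1Seminorm_apply (w : ι → ℝ≥0) (x : ι → ℝ) :
    weightedL1Seminorm w x = ∑ j, w j * |x j| := by
  simp [weightedL1Seminorm, NNReal.smul_def]

theorem weightedL1Seminorm_mono (w : ι → ℝ≥0) {x y : ι → ℝ} (h : |x| ≤ |y|) :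
    weightedL1Seminorm w x ≤ weightedL1Seminorm w y := by
  simp only [weightedL1Seminorm_apply]
  exact Finset.sum_le_sum fun j _ ↦ mul_le_mul_of_nonneg_left (h j) (w j).coe_nonneg

theorem weightedL1Seminorm_comp_equiv {κ : Type*} [Fintype κ] (w : ι → ℝ≥0) (x : ι → ℝ)
    (e : κ ≃ ι) : weightedL1Seminorm (w ∘ e) (x ∘ e) = weightedL1Seminorm w x := by
  simp only [weightedL1Seminorm_apply]
  exact e.sum_comp fun j ↦ (w j : ℝ) * |x j|

variable [DecidableEq ι]

/-- The Lorentz seminorm on `ι → ℝ` with weights `w`: the maximum of `∑ j, w (σ j) * |x j|` over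
all permutations `σ` of `ι`, that is, `∑ j, w j * |x j|` after sorting both families decreasingly.
Maximising over permutations instead of sorting makes the triangle inequality immediate. -/
noncomputable def lorentzSeminorm (w : ι → ℝ≥0) : Seminorm ℝ (ι → ℝ) :=
  Finset.univ.sup fun σ : Equiv.Perm ι ↦ weightedL1Seminorm (w ∘ σ)

theorem weightedL1Seminorm_comp_le_lorentzSeminorm (w : ι → ℝ≥0) (σ : Equiv.Perm ι) (x : ι → ℝ) :
    weightedL1Seminorm (w ∘ σ) x ≤ lorentzSeminorm w x :=
  Seminorm.le_finset_sup_apply (p := fun σ : Equiv.Perm ι ↦ weightedL1Seminorm (w ∘ σ))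
    (Finset.mem_univ σ)

theorem lorentzSeminorm_apply_le {w : ι → ℝ≥0} {x : ι → ℝ} {a : ℝ}
    (h : ∀ σ : Equiv.Perm ι, weightedL1Seminorm (w ∘ σ) x ≤ a) : lorentzSeminorm w x ≤ a :=
  Seminorm.finset_sup_apply_le ((apply_nonneg _ x).trans (h 1)) fun σ _ ↦ h σ

theorem lorentzSeminorm_mono (w : ι → ℝ≥0) {x y : ι → ℝ} (h : |x| ≤ |y|) :
    lorentzSeminorm w x ≤ lorentzSeminorm w y :=
  lorentzSeminorm_apply_le fun σ ↦
    (weightedL1Seminorm_mono _ h).trans (weightedL1Seminorm_comp_le_lorentzSeminorm w σ y)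

theorem eq_zero_of_lorentzSeminorm_eq_zero {w : ι → ℝ≥0} {i : ι} (hi : w i ≠ 0) {x : ι → ℝ}
    (hx : lorentzSeminorm w x = 0) : x = 0 := by
  funext j
  have hle : (w i : ℝ) * |x j| ≤ 0 :=
    calc (w i : ℝ) * |x j|
        = w (Equiv.swap j i j) * |x j| := by rw [Equiv.swap_apply_left]
      _ ≤ ∑ k, w (Equiv.swap j i k) * |x k| :=
          Finset.single_le_sum (f := fun k ↦ (w (Equiv.swap j i k) : ℝ) * |x k|)
            (fun k _ ↦ by positivity) (Finset.mem_univ j)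
      _ = weightedL1Seminorm (w ∘ Equiv.swap j i) x := (weightedL1Seminorm_apply _ x).symm
      _ ≤ lorentzSeminorm w x := weightedL1Seminorm_comp_le_lorentzSeminorm w _ x
      _ = 0 := hx
  have hwi : (0 : ℝ) < w i := NNReal.coe_pos.2 (pos_iff_ne_zero.2 hi)
  exact abs_nonpos_iff.1 (nonpos_of_mul_nonpos_right hle hwi)

theorem lorentzSeminorm_comp_perm_le (w : ι → ℝ≥0) (x : ι → ℝ) (τ : Equiv.Perm ι) :
    lorentzSeminorm w (x ∘ τ) ≤ lorentzSeminorm w x :=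
  lorentzSeminorm_apply_le fun σ ↦
    calc weightedL1Seminorm (w ∘ σ) (x ∘ τ)
        = weightedL1Seminorm ((w ∘ (τ.symm.trans σ)) ∘ τ) (x ∘ τ) := by
          simp [Function.comp_def]
      _ = weightedL1Seminorm (w ∘ (τ.symm.trans σ)) x := weightedL1Seminorm_comp_equiv _ x τ
      _ ≤ lorentzSeminorm w x := weightedL1Seminorm_comp_le_lorentzSeminorm w _ x

theorem lorentzSeminorm_comp_perm (w : ι → ℝ≥0) (x : ι → ℝ) (τ : Equiv.Perm ι) :
    lorentzSeminorm w (x ∘ τ) = lorentzSeminorm w x := by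
  refine (lorentzSeminorm_comp_perm_le w x τ).antisymm ?_
  simpa [Function.comp_assoc] using lorentzSeminorm_comp_perm_le w (x ∘ τ) τ.symm

theorem lorentzSeminorm_eq_weightedL1Seminorm {w : ι → ℝ≥0} {x : ι → ℝ} (h : Monovary w |x|) :
    lorentzSeminorm w x = weightedL1Seminorm w x := by
  refine le_antisymm (lorentzSeminorm_apply_le fun σ ↦ ?_)
    (weightedL1Seminorm_comp_le_lorentzSeminorm w 1 x)
  have hw : Monovary (fun i ↦ (w i : ℝ)) |x| := h
  simp only [weightedL1Seminorm_apply]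
  exact hw.sum_comp_perm_mul_le_sum_mul

theorem lorentzSeminorm_indicator_of_card_eq (w : ι → ℝ≥0) {K L : Finset ι}
    (h : K.card = L.card) :
    lorentzSeminorm w (fun j ↦ if j ∈ K then 1 else 0) =
      lorentzSeminorm w (fun j ↦ if j ∈ L then 1 else 0) := by
  obtain ⟨σ, rfl⟩ := Equiv.Perm.exists_map_finset_eq K L h
  rw [← lorentzSeminorm_comp_perm w (fun j ↦ if j ∈ K.map σ.toEmbedding then 1 else 0) σ]
  congr 1
  funext j
  exact if_congr (Finset.mem_map' σ.toEmbedding).symm rfl rfl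

end Lorentz

theorem monovary_indicator_of_isLowerSet {ι α β : Type*} [LinearOrder ι] [Preorder α]
    [Preorder β] [Zero β] [One β] [ZeroLEOneClass β] {w : ι → α} (hw : Antitone w) {L : Finset ι}
    (hL : IsLowerSet (L : Set ι)) : Monovary w fun j ↦ if j ∈ L then (1 : β) else 0 := by
  intro i j hij
  refine hw (le_of_not_ge fun hle ↦ hij.not_ge ?_)
  by_cases hj : j ∈ L
  · have hi : i ∈ L := hL hle hj
    simp only [hi, hj, if_true, le_refl]
  · simp only [hj, if_false]
    split_ifs
    exacts [zero_le_one, le_rfl]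

theorem lorentzSeminorm_indicator_of_isLowerSet {ι : Type*} [Fintype ι] [LinearOrder ι]
    {w : ι → ℝ≥0} (hw : Antitone w) {L : Finset ι} (hL : IsLowerSet (L : Set ι)) :
    lorentzSeminorm w (fun j ↦ if j ∈ L then 1 else 0) = ∑ j ∈ L, (w j : ℝ) := by
  have habs : |fun j ↦ if j ∈ L then (1 : ℝ) else 0| = fun j ↦ if j ∈ L then 1 else 0 :=
    abs_of_nonneg fun j ↦ by positivity
  have hvary : Monovary w |fun j ↦ if j ∈ L then (1 : ℝ) else 0| := by
    rw [habs]
    exact monovary_indicator_of_isLowerSet hw hL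
  rw [lorentzSeminorm_eq_weightedL1Seminorm hvary, weightedL1Seminorm_apply]
  simp [apply_ite abs]

theorem lorentzSeminorm_indicator_fin {N : ℕ} {w : ℕ → ℝ≥0} (hw : Antitone w)
    (K : Finset (Fin N)) :
    lorentzSeminorm (fun i : Fin N ↦ w i) (fun j ↦ if j ∈ K then 1 else 0) =
      ∑ i ∈ Finset.range K.card, (w i : ℝ) := by
  have hN : ∀ i ∈ Finset.range K.card, i < N := fun i hi ↦
    (Finset.mem_range.1 hi).trans_le (card_finset_fin_le K)
  let L := (Finset.range K.card).attachFin hN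
  have hcard : K.card = L.card := by rw [Finset.card_attachFin, Finset.card_range]
  have hlower : IsLowerSet (L : Set (Fin N)) := fun i j hji hi ↦ by
    simp only [L, Finset.mem_coe, Finset.mem_attachFin, Finset.mem_range] at hi ⊢
    exact lt_of_le_of_lt hji hi
  have hanti : Antitone fun i : Fin N ↦ w i := fun i j hij ↦ hw hij
  rw [lorentzSeminorm_indicator_of_card_eq _ hcard,
    lorentzSeminorm_indicator_of_isLowerSet hanti hlower,
    ← Finset.map_valEmbedding_attachFin hN, Finset.sum_map]
  rfl

/-- The increments `g (n + 1) - g n` of a real sequence, as weights for a Lorentz seminorm;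
negative increments are truncated to `0`. -/
noncomputable def incrementWeight (g : ℕ → ℝ) (n : ℕ) : ℝ≥0 :=
  (g (n + 1) - g n).toNNReal

theorem sum_range_incrementWeight {g : ℕ → ℝ} (hg : Monotone g) (n : ℕ) :
    ∑ i ∈ Finset.range n, (incrementWeight g i : ℝ) = g n - g 0 := by
  rw [← Finset.sum_range_sub]
  exact Finset.sum_congr rfl fun i _ ↦ Real.coe_toNNReal _ (sub_nonneg.2 (hg i.le_succ))

theorem antitone_incrementWeight_of_concaveOn {f : ℝ → ℝ} (hf : ConcaveOn ℝ (Set.Ici 0) f) :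
    Antitone (incrementWeight fun n : ℕ ↦ f n) := by
  refine antitone_nat_of_succ_le fun n ↦ Real.toNNReal_mono ?_
  have hslope := hf.slope_anti_adjacent (x := n) (y := n + 1) (z := n + 2)
    (Set.mem_Ici.2 (by positivity)) (Set.mem_Ici.2 (by positivity)) (by linarith) (by linarith)
  have h₁ : (n + 1 - n : ℝ) = 1 := by ring
  have h₂ : (n + 2 - (n + 1) : ℝ) = 1 := by ring
  rw [h₁, h₂, div_one, div_one] at hslope
  simpa [add_assoc, one_add_one_eq_two] using hslope

/-- Let `C : ℤ → [0,∞)` satisfy (i) even and vanishing exactly at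
`0`, (ii) monotone with respect to `⪯`, and suppose `C` coincides on `ℕ` with a
concave function `f : [0,∞) → ℝ` with `f 0 = C 0 = 0`. Then for every positive
integer `N` there exists a monotone norm on `ℝ^N` satisfying the compatibility
equation for `C`. -/
theorem concave_cost_has_compatible_monotone_norm
    (C : ℤ → ℝ)
    (hC0 : ∀ z, 0 ≤ C z)
    (heven : ∀ z, C (-z) = C z)
    (hzero : ∀ z, C z = 0 ↔ z = 0)
    (hmono : ∀ z w : ℤ, |z| ≤ |w| → 0 ≤ z * w → C z ≤ C w)
    (f : ℝ → ℝ)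
    (hconc : ConcaveOn ℝ (Set.Ici 0) f)
    (hf0 : f 0 = 0)
    (hagree : ∀ n : ℕ, C (n : ℤ) = f (n : ℝ)) :
    ∀ N : ℕ, 0 < N → ∃ nrm : (Fin N → ℝ) → ℝ,
      IsNorm nrm ∧ (∀ x y, PreOrd x y → nrm x ≤ nrm y) ∧ CompatEq1 N C nrm := by
  intro N hN
  set g : ℕ → ℝ := fun n ↦ C n with hg
  have hC : C 0 = 0 := (hzero 0).2 rfl
  have hgmono : Monotone g := fun m n hmn ↦ hmono m n (by simpa using hmn) (by positivity)
  have hanti : Antitone (incrementWeight g) := by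
    simpa only [hg, hagree] using antitone_incrementWeight_of_concaveOn hconc
  have hpos : incrementWeight g 0 ≠ 0 := by
    have hC1 : 0 < C 1 := (hC0 1).lt_of_ne' ((hzero 1).not.2 one_ne_zero)
    simpa [incrementWeight, hg, hC] using hC1
  let p := lorentzSeminorm fun i : Fin N ↦ incrementWeight g i
  refine ⟨p, .of_seminorm p fun x ↦ eq_zero_of_lorentzSeminorm_eq_zero (i := ⟨0, hN⟩) hpos,
    fun x y hxy ↦ lorentzSeminorm_mono _ fun j ↦ (hxy j).1, .of_seminorm heven p fun K ↦ ?_⟩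
  calc p (fun j ↦ if j ∈ K then 1 else 0)
      = ∑ i ∈ Finset.range K.card, (incrementWeight g i : ℝ) :=
        lorentzSeminorm_indicator_fin hanti K
    _ = g K.card - g 0 := sum_range_incrementWeight hgmono _
    _ = C K.card := by simp [hg, hC]
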